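/- Let A be a C*-algebra and suppose J ⋐ I is a compact containment of closed two-sided ideals in A, and a ∈ I is a full positive element (I is the closed ideal generated by a). Then there exists λ > 0 such that for all ideals K₁ ⊊ K₂ ⊆ J, the image of a in A/K₂^{K₁} has norm at least λ, where K₂^{K₁} = { x ∈ A : xK₂ ∪ K₂x ⊆ K₁ }. -/

import Mathlib

/-- A subset of a C*-algebra is a closed two-sided ideal. -/
def IsClosedTwoSidedIdeal {A : Type*} [NonUnitalCStarAlgebra A] (S : Set A) : Prop :=
  IsClosed S ∧ (0 : A) ∈ S ∧ (∀ x ∈ S, ∀ y ∈ S, x + y ∈ S) ∧ (∀ x ∈ S, -x ∈ S) ∧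
    (∀ a : A, ∀ x ∈ S, a * x ∈ S ∧ x * a ∈ S)

/-- For nested ideals `J ⊆ I` of `A`, the set `I^J = {x ∈ A : xI ⊆ J and Ix ⊆ J}`. -/
def relIdeal {A : Type*} [NonUnitalCStarAlgebra A] (I J : Set A) : Set A :=
  {x : A | ∀ a ∈ I, x * a ∈ J ∧ a * x ∈ J}

/-- The smallest closed two-sided ideal of `A` containing `a`. -/
def closedIdealGen {A : Type*} [NonUnitalCStarAlgebra A] (a : A) : Set A :=
  ⋂₀ {S : Set A | IsClosedTwoSidedIdeal S ∧ a ∈ S}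

/-- `J` is compactly contained in `I`: whenever `I` is contained in the closed sum of a
family of closed two-sided ideals, `J` is contained in a finite subsum. -/
def IsCompactlyContained {A : Type*} [NonUnitalCStarAlgebra A] (J I : Set A) : Prop :=
  ∀ {ι : Type*} (K : ι → Set A), (∀ l, IsClosedTwoSidedIdeal (K l)) →
    I ⊆ closure {x : A | ∃ (s : Finset ι) (f : ι → A),
        (∀ l ∈ s, f l ∈ K l) ∧ x = ∑ l ∈ s, f l} →
    ∃ s : Finset ι, J ⊆ {x : A | ∃ f : ι → A, (∀ l ∈ s, f l ∈ K l) ∧ x = ∑ l ∈ s, f l}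

/-!
Let `h = star a * a`, which generates the same closed ideal as `a`. For `l > 0` let `h_l` be the
image of `h` under a continuous function that vanishes on `[-l, l]` and is uniformly within `l` of
the identity. In a quotient where the image of `h` has norm less than `l`, the image of `h_l` is
zero, so every closed ideal at distance less than `l` from `h` contains `h_l`. Since `h_l → h` as
`l → 0`, compact containment puts `J` inside a finite sum of the ideals generated by the `h_l`;
hence every closed ideal close enough to `a` contains `J`. If that ideal is `K₂^{K₁}` and
`K₂ ⊆ J`, then `x * (star x * x) ∈ K₁` for all `x ∈ K₂`, which forces `x ∈ K₁`.
-/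

open Filter Metric Topology

section ScalarFunctions

/-- The soft threshold, which for `l, t ≥ 0` is `(t - l)₊`. Applying it through the functional
calculus gives the element written `(a - l)₊` for positive `a`; extending it to an odd function
lets the same argument run for self-adjoint `a`. -/
def softThreshold (l t : ℝ) : ℝ := t - max (-l) (min l t)

/-- A continuous substitute for `t⁻¹`: for `l > 0` it equals `t⁻¹` where `l ≤ |t|`, and it is
bounded by `l⁻¹` everywhere. -/
noncomputable def truncatedInv (l t : ℝ) : ℝ := t / max (l ^ 2) (t ^ 2)

variable {l : ℝ}

@[fun_prop]
lemma continuous_softThreshold : Continuous (softThreshold l) := by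
  unfold softThreshold
  fun_prop

lemma softThreshold_eq_zero {t : ℝ} (ht : |t| ≤ l) : softThreshold l t = 0 := by
  rw [softThreshold, min_eq_right (abs_le.1 ht).2, max_eq_right (abs_le.1 ht).1, sub_self]

lemma softThreshold_zero (hl : 0 ≤ l) : softThreshold l 0 = 0 :=
  softThreshold_eq_zero (by rwa [abs_zero])

lemma abs_sub_softThreshold_le (hl : 0 ≤ l) (t : ℝ) : |t - softThreshold l t| ≤ l := by
  rw [softThreshold, sub_sub_cancel, abs_le]
  exact ⟨le_max_left _ _, max_le (by linarith) (min_le_left _ _)⟩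

lemma continuous_truncatedInv (hl : 0 < l) : Continuous (truncatedInv l) :=
  .div (by fun_prop) (by fun_prop) fun _ => (lt_max_of_lt_left (pow_pos hl 2)).ne'

lemma truncatedInv_zero : truncatedInv l 0 = 0 := zero_div _

lemma truncatedInv_eq_inv (hl : 0 ≤ l) {t : ℝ} (ht : l ≤ |t|) : truncatedInv l t = t⁻¹ := by
  have hsq : l ^ 2 ≤ t ^ 2 := sq_abs t ▸ pow_le_pow_left₀ hl ht 2
  rw [truncatedInv, max_eq_right hsq, sq, div_self_mul_self']

lemma abs_truncatedInv_le (hl : 0 < l) (t : ℝ) : |truncatedInv l t| ≤ l⁻¹ := by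
  have hmax : 0 < max (l ^ 2) (t ^ 2) := lt_max_of_lt_left (pow_pos hl 2)
  rw [truncatedInv, abs_div, abs_of_pos hmax, div_le_iff₀ hmax, inv_mul_eq_div, le_div_iff₀ hl]
  calc |t| * l ≤ max l |t| * max l |t| := by
        gcongr
        exacts [le_max_right _ _, le_max_left _ _]
    _ ≤ max (l ^ 2) (t ^ 2) := by
        rcases le_total l |t| with h | h <;> simp [h, ← sq]

lemma softThreshold_mul_mul_truncatedInv (hl : 0 < l) (t : ℝ) :
    softThreshold l t * t * truncatedInv l t = softThreshold l t := by
  rcases le_total |t| l with h | h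
  · simp only [softThreshold_eq_zero h, zero_mul]
  · have ht : t ≠ 0 := abs_pos.1 (hl.trans_le h)
    rw [truncatedInv_eq_inv hl.le h, mul_inv_cancel_right₀ ht]

lemma abs_mul_one_sub_mul_truncatedInv_sq_le (hl : 0 < l) (t : ℝ) :
    |t * (1 - t * truncatedInv l t) ^ 2| ≤ l := by
  rcases le_total l |t| with h | h
  · have ht : t ≠ 0 := abs_pos.1 (hl.trans_le h)
    simpa [truncatedInv_eq_inv hl.le h, ht] using hl.le
  · have hmax : 0 ≤ max (l ^ 2) (t ^ 2) := le_max_of_le_left (sq_nonneg l)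
    have heq : t * truncatedInv l t = t ^ 2 / max (l ^ 2) (t ^ 2) := by
      rw [truncatedInv, ← mul_div_assoc, sq t]
    have hnonneg : 0 ≤ t * truncatedInv l t := heq ▸ div_nonneg (sq_nonneg t) hmax
    have hle : t * truncatedInv l t ≤ 1 := heq ▸ div_le_one_of_le₀ (le_max_right _ _) hmax
    rw [abs_mul, abs_sq]
    exact (mul_le_of_le_one_right (abs_nonneg t)
      (pow_le_one₀ (sub_nonneg.2 hle) (sub_le_self 1 hnonneg))).trans h

end ScalarFunctions

lemma infDist_le_mul_infDist {X : Type*} [PseudoMetricSpace X] {s : Set X} (hs : s.Nonempty)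
    {x y : X} {C : ℝ} (hC : 0 ≤ C) (h : ∀ z ∈ s, infDist y s ≤ C * dist x z) :
    infDist y s ≤ C * infDist x s := by
  have := hs.to_subtype
  rw [infDist_eq_iInf (x := x), Real.mul_iInf_of_nonneg hC]
  exact le_ciInf fun z => h z z.2

section FunctionalCalculus

variable {A : Type*} [NonUnitalCStarAlgebra A]

lemma norm_sub_cfcₙ_softThreshold_le {a : A} (ha : IsSelfAdjoint a) {l : ℝ} (hl : 0 ≤ l) :
    ‖a - cfcₙ (softThreshold l) a‖ ≤ l := by
  have hzero := softThreshold_zero hl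
  have hsub : a - cfcₙ (softThreshold l) a = cfcₙ (fun t => t - softThreshold l t) a := by
    rw [cfcₙ_sub (fun t : ℝ => t) (softThreshold l) a, cfcₙ_id' ℝ a]
  rw [hsub]
  exact norm_cfcₙ_le fun t _ => abs_sub_softThreshold_le hl t

lemma cfcₙ_softThreshold_mul_mul_cfcₙ_truncatedInv {a : A} (ha : IsSelfAdjoint a) {l : ℝ}
    (hl : 0 < l) :
    cfcₙ (softThreshold l) a * a * cfcₙ (truncatedInv l) a = cfcₙ (softThreshold l) a := by
  have hzero := softThreshold_zero hl.le
  have hcont := continuous_truncatedInv hl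
  have hmul : cfcₙ (softThreshold l) a * a = cfcₙ (fun t => softThreshold l t * t) a := by
    rw [cfcₙ_mul (softThreshold l) (fun t => t) a, cfcₙ_id' ℝ a]
  rw [hmul, ← cfcₙ_mul (fun t => softThreshold l t * t) (truncatedInv l) a
    (hg0 := truncatedInv_zero)]
  simp only [softThreshold_mul_mul_truncatedInv hl]

lemma star_mul_self_sub_mul_cfcₙ (x : A) {p : ℝ → ℝ} (hp : Continuous p) (hp0 : p 0 = 0) :
    star (x - x * cfcₙ p (star x * x)) * (x - x * cfcₙ p (star x * x)) =
      cfcₙ (fun t => t * (1 - p t) ^ 2) (star x * x) := by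
  set y := star x * x with hy
  have hysa : IsSelfAdjoint y := .star_mul_self x
  have hqsa : star (cfcₙ p y) = cfcₙ p y := cfcₙ_predicate p y
  have hpoly : (fun t => t * (1 - p t) ^ 2) =
      fun t => t - t * p t - (p t * t - p t * (t * p t)) := by
    funext t
    ring
  have hcalc : cfcₙ (fun t => t - t * p t - (p t * t - p t * (t * p t))) y =
      y - y * cfcₙ p y - (cfcₙ p y * y - cfcₙ p y * (y * cfcₙ p y)) := by
    rw [cfcₙ_sub (fun t => t - t * p t) (fun t => p t * t - p t * (t * p t)) y,
      cfcₙ_sub (fun t : ℝ => t) (fun t => t * p t) y,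
      cfcₙ_sub (fun t => p t * t) (fun t => p t * (t * p t)) y,
      cfcₙ_mul p (fun t => t * p t) y, cfcₙ_mul p (fun t => t) y,
      cfcₙ_mul (fun t => t) p y, cfcₙ_id' ℝ y]
  rw [hpoly, hcalc, star_sub, star_mul, hqsa, sub_mul, mul_sub, mul_assoc, mul_sub,
    ← mul_assoc (star x), ← hy, mul_sub]

end FunctionalCalculus

namespace IsClosedTwoSidedIdeal

variable {A : Type*} [NonUnitalCStarAlgebra A] {R : Set A}

lemma isClosed (hR : IsClosedTwoSidedIdeal R) : IsClosed R := hR.1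

lemma zero_mem (hR : IsClosedTwoSidedIdeal R) : (0 : A) ∈ R := hR.2.1

lemma nonempty (hR : IsClosedTwoSidedIdeal R) : R.Nonempty := ⟨0, hR.zero_mem⟩

lemma add_mem (hR : IsClosedTwoSidedIdeal R) {x y : A} (hx : x ∈ R) (hy : y ∈ R) : x + y ∈ R :=
  hR.2.2.1 x hx y hy

lemma neg_mem (hR : IsClosedTwoSidedIdeal R) {x : A} (hx : x ∈ R) : -x ∈ R := hR.2.2.2.1 x hx

lemma mul_mem_left (hR : IsClosedTwoSidedIdeal R) (a : A) {x : A} (hx : x ∈ R) : a * x ∈ R :=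
  (hR.2.2.2.2 a x hx).1

lemma mul_mem_right (hR : IsClosedTwoSidedIdeal R) (a : A) {x : A} (hx : x ∈ R) : x * a ∈ R :=
  (hR.2.2.2.2 a x hx).2

lemma sum_mem (hR : IsClosedTwoSidedIdeal R) {ι : Type*} {s : Finset ι} {f : ι → A}
    (hf : ∀ i ∈ s, f i ∈ R) : ∑ i ∈ s, f i ∈ R :=
  Finset.sum_induction f (· ∈ R) (fun _ _ => hR.add_mem) hR.zero_mem hf

lemma infDist_mul_le (hR : IsClosedTwoSidedIdeal R) (b a : A) :
    infDist (b * a) R ≤ ‖b‖ * infDist a R := by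
  refine infDist_le_mul_infDist hR.nonempty (norm_nonneg b) fun r hr => ?_
  calc infDist (b * a) R ≤ dist (b * a) (b * r) := infDist_le_dist_of_mem (hR.mul_mem_left b hr)
    _ = ‖b * (a - r)‖ := by rw [dist_eq_norm, mul_sub]
    _ ≤ ‖b‖ * dist a r := by rw [dist_eq_norm]; exact norm_mul_le _ _

-- In `A / R` the hypothesis reads `b = b * c`, so `‖b‖ ≤ ‖b‖ * ‖c‖` there.
lemma mem_of_sub_mul_mem (hR : IsClosedTwoSidedIdeal R) {b c : A} (hc : ‖c‖ < 1)
    (h : b - b * c ∈ R) : b ∈ R := by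
  have hle : infDist b R ≤ ‖c‖ * infDist b R := by
    refine infDist_le_mul_infDist hR.nonempty (norm_nonneg c) fun r hr => ?_
    calc infDist b R ≤ dist b (b - b * c + r * c) :=
          infDist_le_dist_of_mem (hR.add_mem h (hR.mul_mem_right c hr))
      _ = ‖(b - r) * c‖ := by rw [dist_eq_norm, sub_mul]; congr 1; abel
      _ ≤ ‖c‖ * dist b r := by rw [dist_eq_norm, mul_comm]; exact norm_mul_le _ _
  rw [hR.isClosed.mem_iff_infDist_zero hR.nonempty]
  nlinarith [infDist_nonneg (x := b) (s := R)]

lemma cfcₙ_softThreshold_mem (hR : IsClosedTwoSidedIdeal R) {a : A} (ha : IsSelfAdjoint a)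
    {l : ℝ} (hl : 0 < l) (hdist : infDist a R < l) : cfcₙ (softThreshold l) a ∈ R := by
  obtain ⟨x, hx, hax⟩ := (infDist_lt_iff hR.nonempty).1 hdist
  set b := cfcₙ (softThreshold l) a
  set k := cfcₙ (truncatedInv l) a
  have hbak : b * a * k = b := cfcₙ_softThreshold_mul_mul_cfcₙ_truncatedInv ha hl
  have hk : ‖k‖ ≤ l⁻¹ := norm_cfcₙ_le fun t _ => abs_truncatedInv_le hl t
  have hnorm : ‖(a - x) * k‖ < 1 :=
    calc ‖(a - x) * k‖ ≤ ‖a - x‖ * l⁻¹ := norm_mul_le_of_le le_rfl hk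
      _ < l * l⁻¹ := by
        rw [← dist_eq_norm]
        gcongr
      _ = 1 := mul_inv_cancel₀ hl.ne'
  have hsub : b - b * ((a - x) * k) = b * x * k := by
    rw [← mul_assoc, mul_sub, sub_mul, hbak, sub_sub_cancel]
  exact hR.mem_of_sub_mul_mem hnorm (hsub ▸ hR.mul_mem_right k (hR.mul_mem_left b hx))

lemma mem_of_mul_star_mul_self_mem (hR : IsClosedTwoSidedIdeal R) {x : A}
    (hx : x * (star x * x) ∈ R) : x ∈ R := by
  rw [← hR.isClosed.closure_eq, Metric.mem_closure_iff]
  intro ε hε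
  set y := star x * x
  have hysa : IsSelfAdjoint y := .star_mul_self x
  have hl : 0 < (ε / 2) ^ 2 := by positivity
  set g := truncatedInv ((ε / 2) ^ 2)
  have hg : Continuous g := continuous_truncatedInv hl
  have hg0 : g 0 = 0 := truncatedInv_zero
  have hmul : cfcₙ (fun t => t * g t) y = y * cfcₙ g y := by
    rw [cfcₙ_mul (fun t => t) g y, cfcₙ_id' ℝ y]
  have hnorm : ‖x - x * (y * cfcₙ g y)‖ ≤ ε / 2 := by
    refine le_of_sq_le_sq ?_ (by positivity)
    rw [sq, ← CStarRing.norm_star_mul_self, ← hmul,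
      star_mul_self_sub_mul_cfcₙ x (p := fun t => t * g t) (by fun_prop) (zero_mul _)]
    exact norm_cfcₙ_le fun t _ => abs_mul_one_sub_mul_truncatedInv_sq_le hl t
  refine ⟨x * (y * cfcₙ g y), mul_assoc x y _ ▸ hR.mul_mem_right _ hx, ?_⟩
  rw [dist_eq_norm]
  linarith

end IsClosedTwoSidedIdeal

section Ideals

variable {A : Type*} [NonUnitalCStarAlgebra A]

lemma isClosedTwoSidedIdeal_closure {T : Set A} (hzero : (0 : A) ∈ T)
    (hadd : ∀ x ∈ T, ∀ y ∈ T, x + y ∈ T) (hneg : ∀ x ∈ T, -x ∈ T)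
    (hmul : ∀ a : A, ∀ x ∈ T, a * x ∈ T ∧ x * a ∈ T) : IsClosedTwoSidedIdeal (closure T) :=
  ⟨isClosed_closure, subset_closure hzero,
    fun _ hx _ hy => map_mem_closure₂ continuous_add hx hy hadd,
    fun _ hx => map_mem_closure continuous_neg hx hneg,
    fun a _ hx => ⟨map_mem_closure (continuous_const_mul a) hx fun x hx => (hmul a x hx).1,
      map_mem_closure (f := (· * a)) (continuous_mul_const a) hx fun x hx => (hmul a x hx).2⟩⟩

lemma isClosedTwoSidedIdeal_closedIdealGen (a : A) :
    IsClosedTwoSidedIdeal (closedIdealGen a) :=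
  ⟨isClosed_sInter fun _ hS => hS.1.isClosed, fun _ hS => hS.1.zero_mem,
    fun _ hx _ hy S hS => hS.1.add_mem (hx S hS) (hy S hS),
    fun _ hx S hS => hS.1.neg_mem (hx S hS),
    fun b _ hx => ⟨fun S hS => hS.1.mul_mem_left b (hx S hS),
      fun S hS => hS.1.mul_mem_right b (hx S hS)⟩⟩

lemma mem_closedIdealGen_self (a : A) : a ∈ closedIdealGen a := fun _ hS => hS.2

lemma closedIdealGen_subset {R : Set A} (hR : IsClosedTwoSidedIdeal R) {a : A} (ha : a ∈ R) :
    closedIdealGen a ⊆ R :=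
  Set.sInter_subset_of_mem ⟨hR, ha⟩

lemma isClosedTwoSidedIdeal_relIdeal {K₁ K₂ : Set A} (h₁ : IsClosedTwoSidedIdeal K₁)
    (h₂ : IsClosedTwoSidedIdeal K₂) : IsClosedTwoSidedIdeal (relIdeal K₂ K₁) := by
  refine ⟨?_, fun y _ => ?_, fun x hx x' hx' y hy => ?_, fun x hx y hy => ?_,
    fun a x hx => ⟨fun y hy => ?_, fun y hy => ?_⟩⟩
  · have hInter : relIdeal K₂ K₁ = ⋂ y ∈ K₂, (· * y) ⁻¹' K₁ ∩ (y * ·) ⁻¹' K₁ := by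
      ext x
      simp [relIdeal]
    rw [hInter]
    exact isClosed_biInter fun y _ => (h₁.isClosed.preimage (continuous_mul_const y)).inter
      (h₁.isClosed.preimage (continuous_const_mul y))
  · rw [zero_mul, mul_zero]
    exact ⟨h₁.zero_mem, h₁.zero_mem⟩
  · rw [add_mul, mul_add]
    exact ⟨h₁.add_mem (hx y hy).1 (hx' y hy).1, h₁.add_mem (hx y hy).2 (hx' y hy).2⟩
  · rw [neg_mul, mul_neg]
    exact ⟨h₁.neg_mem (hx y hy).1, h₁.neg_mem (hx y hy).2⟩
  · rw [mul_assoc, ← mul_assoc y]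
    exact ⟨h₁.mul_mem_left a (hx y hy).1, (hx _ (h₂.mul_mem_right a hy)).2⟩
  · rw [mul_assoc, ← mul_assoc y]
    exact ⟨(hx _ (h₂.mul_mem_left a hy)).1, h₁.mul_mem_right a (hx y hy).2⟩

lemma subset_of_subset_relIdeal {K₁ K₂ : Set A} (h₁ : IsClosedTwoSidedIdeal K₁)
    (h₂ : IsClosedTwoSidedIdeal K₂) (h : K₂ ⊆ relIdeal K₂ K₁) : K₂ ⊆ K₁ := fun x hx =>
  h₁.mem_of_mul_star_mul_self_mem (h (h₂.mul_mem_left (star x) hx) x hx).2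

/-- The algebraic sum of a family of ideals, written as in the definition of
`IsCompactlyContained`, whose hypothesis is about the closure of this set. -/
def idealSum {ι : Type*} (K : ι → Set A) : Set A :=
  {x | ∃ (s : Finset ι) (f : ι → A), (∀ i ∈ s, f i ∈ K i) ∧ x = ∑ i ∈ s, f i}

variable {ι : Type*} {K : ι → Set A}

lemma subset_idealSum (i : ι) : K i ⊆ idealSum K := fun x hx =>
  ⟨{i}, fun _ => x, by simpa using hx, (Finset.sum_singleton (fun _ => x) i).symm⟩

lemma add_mem_idealSum (hK : ∀ i, IsClosedTwoSidedIdeal (K i)) {x y : A} (hx : x ∈ idealSum K)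
    (hy : y ∈ idealSum K) : x + y ∈ idealSum K := by
  classical
  obtain ⟨s, f, hf, rfl⟩ := hx
  obtain ⟨t, g, hg, rfl⟩ := hy
  refine ⟨s ∪ t, fun i => (if i ∈ s then f i else 0) + (if i ∈ t then g i else 0),
    fun i _ => (hK i).add_mem ?_ ?_, ?_⟩
  · split_ifs with hi
    exacts [hf i hi, (hK i).zero_mem]
  · split_ifs with hi
    exacts [hg i hi, (hK i).zero_mem]
  · rw [Finset.sum_add_distrib, Finset.sum_ite_mem, Finset.sum_ite_mem,
      Finset.union_inter_cancel_left, Finset.union_inter_cancel_right]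

lemma isClosedTwoSidedIdeal_closure_idealSum (hK : ∀ i, IsClosedTwoSidedIdeal (K i)) :
    IsClosedTwoSidedIdeal (closure (idealSum K)) := by
  refine isClosedTwoSidedIdeal_closure ⟨∅, 0, by simp, by simp⟩
    (fun _ hx _ hy => add_mem_idealSum hK hx hy) ?_ ?_
  · rintro _ ⟨s, f, hf, rfl⟩
    exact ⟨s, -f, fun i hi => (hK i).neg_mem (hf i hi), by simp⟩
  · rintro a _ ⟨s, f, hf, rfl⟩
    exact ⟨⟨s, fun i => a * f i, fun i hi => (hK i).mul_mem_left a (hf i hi), Finset.mul_sum ..⟩,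
      ⟨s, fun i => f i * a, fun i hi => (hK i).mul_mem_right a (hf i hi), Finset.sum_mul ..⟩⟩

end Ideals

section CompactContainment

variable {A : Type*} [NonUnitalCStarAlgebra A]

/-- The closed ideal generated by the soft threshold of `star a * a` at a positive level. The
index is lifted to the arbitrary universe over which `IsCompactlyContained` quantifies. -/
noncomputable def thresholdIdeal (a : A) (l : ULift (Set.Ioi (0 : ℝ))) : Set A :=
  closedIdealGen (cfcₙ (softThreshold l.down) (star a * a))

lemma isClosedTwoSidedIdeal_thresholdIdeal (a : A) (l : ULift (Set.Ioi (0 : ℝ))) :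
    IsClosedTwoSidedIdeal (thresholdIdeal a l) :=
  isClosedTwoSidedIdeal_closedIdealGen _

lemma thresholdIdeal_subset {R : Set A} (hR : IsClosedTwoSidedIdeal R) {a : A}
    {l : ULift (Set.Ioi (0 : ℝ))} (h : infDist (star a * a) R < l.down) :
    thresholdIdeal a l ⊆ R :=
  closedIdealGen_subset hR (hR.cfcₙ_softThreshold_mem (.star_mul_self a) l.down.2 h)

lemma closedIdealGen_subset_closure_idealSum_thresholdIdeal (a : A) :
    closedIdealGen a ⊆ closure (idealSum (thresholdIdeal a)) := by
  have hideal := isClosedTwoSidedIdeal_closure_idealSum (isClosedTwoSidedIdeal_thresholdIdeal a)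
  have hmem : star a * a ∈ closure (idealSum (thresholdIdeal a)) := by
    refine Metric.mem_closure_iff.2 fun ε hε => ?_
    refine ⟨_, subset_idealSum ⟨ε / 2, half_pos hε⟩ (mem_closedIdealGen_self _), ?_⟩
    rw [dist_eq_norm]
    exact (norm_sub_cfcₙ_softThreshold_le (.star_mul_self a) (half_pos hε).le).trans_lt
      (half_lt_self hε)
  exact closedIdealGen_subset hideal
    (hideal.mem_of_mul_star_mul_self_mem (hideal.mul_mem_left a hmem))

lemma exists_pos_forall_subset_of_infDist_lt {J : Set A} {a : A}
    (hcpt : IsCompactlyContained J (closedIdealGen a)) :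
    ∃ lam : ℝ, 0 < lam ∧ ∀ R : Set A, IsClosedTwoSidedIdeal R → infDist a R < lam → J ⊆ R := by
  obtain ⟨s, hs⟩ := hcpt (thresholdIdeal a) (isClosedTwoSidedIdeal_thresholdIdeal a)
    (closedIdealGen_subset_closure_idealSum_thresholdIdeal a)
  have hsmall : ∀ᶠ lam : ℝ in 𝓝[>] 0, ∀ l ∈ s, ‖a‖ * lam < l.down := by
    refine (Finset.eventually_all s).2 fun l _ => Eventually.filter_mono inf_le_left ?_
    have hlim : Tendsto (fun lam => ‖a‖ * lam) (𝓝 0) (𝓝 0) :=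
      (continuous_const_mul ‖a‖).tendsto' 0 0 (mul_zero _)
    exact hlim.eventually_lt_const l.down.2
  obtain ⟨lam, hlt, hpos⟩ := (hsmall.and self_mem_nhdsWithin).exists
  refine ⟨lam, hpos, fun R hR hdist x hx => ?_⟩
  obtain ⟨f, hf, rfl⟩ := hs hx
  refine hR.sum_mem fun l hl => thresholdIdeal_subset hR ?_ (hf l hl)
  calc infDist (star a * a) R ≤ ‖star a‖ * infDist a R := hR.infDist_mul_le _ _
    _ ≤ ‖a‖ * lam := by rw [norm_star]; gcongr
    _ < l.down := hlt l hl

theorem exists_uniform_lower_bound_of_compactly_contained_general {J : Set A} {a : A}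
    (hcpt : IsCompactlyContained J (closedIdealGen a)) :
    ∃ lam : ℝ, 0 < lam ∧
      ∀ K₁ K₂ : Set A, IsClosedTwoSidedIdeal K₁ → IsClosedTwoSidedIdeal K₂ →
        ¬K₂ ⊆ K₁ → K₂ ⊆ J → lam ≤ infDist a (relIdeal K₂ K₁) := by
  obtain ⟨lam, hpos, hlam⟩ := exists_pos_forall_subset_of_infDist_lt hcpt
  refine ⟨lam, hpos, fun K₁ K₂ h₁ h₂ hnot hKJ => le_of_not_gt fun hdist => hnot ?_⟩
  have hJ : J ⊆ relIdeal K₂ K₁ := hlam _ (isClosedTwoSidedIdeal_relIdeal h₁ h₂) hdist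
  exact subset_of_subset_relIdeal h₁ h₂ (hKJ.trans hJ)

end CompactContainment

/-- If `J ⋐ I` is a compact containment of ideals and `a ∈ I` is a full positive element,
then there is `λ > 0` such that for all ideals `K₁ ⊊ K₂ ⊆ J`, the image of `a` in
`A/K₂^{K₁}` has norm at least `λ` (the quotient norm being the distance to `K₂^{K₁}`). -/
theorem exists_uniform_lower_bound_of_compactly_contained
    {A : Type*} [NonUnitalCStarAlgebra A] [PartialOrder A] [StarOrderedRing A]
    (J I : Set A) (hJ : IsClosedTwoSidedIdeal J) (hI : IsClosedTwoSidedIdeal I)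
    (hJI : J ⊆ I) (hcpt : IsCompactlyContained J I)
    (a : A) (ha : 0 ≤ a) (haI : a ∈ I) (hfull : closedIdealGen a = I) :
    ∃ lam : ℝ, 0 < lam ∧
      ∀ K₁ K₂ : Set A, IsClosedTwoSidedIdeal K₁ → IsClosedTwoSidedIdeal K₂ →
        K₁ ⊂ K₂ → K₂ ⊆ J → lam ≤ Metric.infDist a (relIdeal K₂ K₁) := by
  subst hfull
  obtain ⟨lam, hpos, hlam⟩ := exists_uniform_lower_bound_of_compactly_contained_general hcpt
  exact ⟨lam, hpos, fun K₁ K₂ h₁ h₂ hlt => hlam K₁ K₂ h₁ h₂ hlt.2⟩
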